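/- Let n = 1 and let Q be a real normal defining function of dimension 1 with (z,χ) ↦ Q(z,χ,0) not identically zero near 0 (M of finite type at 0). Write the Taylor expansion Q(z,χ,0) = Σ_{j,k ≥ 0} c_{j,k} z^j χ^k at 0, and set m := min{k : c_{j,k} ≠ 0 for some j}, r := min{j : c_{j,m} ≠ 0}, n₀ := min{j : c_{j,k} ≠ 0 for some k}, and s := min{k : c_{n₀,k} ≠ 0}. Then m = n₀ and r = s. -/

import Mathlib

open Filter Topology Complex

namespace HSPMpaper

variable {n : ℕ}

/-- Partial derivative of `F` in the `i`-th coordinate direction. -/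
noncomputable def pd (i : Fin n) (F : (Fin n → ℂ) → ℂ) : (Fin n → ℂ) → ℂ :=
  fun z => fderiv ℂ F z (Pi.single i 1)

/-- Iterated partial derivative `∂^α` for a multi-index `α`. -/
noncomputable def mpd (α : Fin n → ℕ) (F : (Fin n → ℂ) → ℂ) : (Fin n → ℂ) → ℂ :=
  ((List.ofFn fun i : Fin n => (pd i)^[α i]).foldr (· ∘ ·) id) F

/-- Componentwise complex conjugation on `ℂⁿ`. -/
def conjV (z : Fin n → ℂ) : Fin n → ℂ := fun i => starRingEnd ℂ (z i)

/-- The conjugate defining function `Q̄(χ,z,τ) = conj (Q (conj χ) (conj z) (conj τ))`. -/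
def QBar (Q : (Fin n → ℂ) → (Fin n → ℂ) → ℂ → ℂ) : (Fin n → ℂ) → (Fin n → ℂ) → ℂ → ℂ :=
  fun χ z τ => starRingEnd ℂ (Q (conjV χ) (conjV z) (starRingEnd ℂ τ))

/-- `Q` is a normal defining function (of dimension `n`): holomorphic near the origin of
`ℂⁿ × ℂⁿ × ℂ` and satisfying `Q(0,χ,τ) = τ` and `Q(z,0,τ) = τ` near `0`. -/
def IsNormalDF (Q : (Fin n → ℂ) → (Fin n → ℂ) → ℂ → ℂ) : Prop :=
  (∀ᶠ p in 𝓝 (0 : (Fin n → ℂ) × (Fin n → ℂ) × ℂ),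
      AnalyticAt ℂ (fun q : (Fin n → ℂ) × (Fin n → ℂ) × ℂ => Q q.1 q.2.1 q.2.2) p) ∧
  (∀ᶠ p in 𝓝 (0 : (Fin n → ℂ) × (Fin n → ℂ) × ℂ),
      Q 0 p.2.1 p.2.2 = p.2.2 ∧ Q p.1 0 p.2.2 = p.2.2)

/-- `Q` is a real normal defining function: normal and `Q(z,χ,Q̄(χ,z,w)) = w` near `0`. -/
def IsRealNormalDF (Q : (Fin n → ℂ) → (Fin n → ℂ) → ℂ → ℂ) : Prop :=
  IsNormalDF Q ∧
  ∀ᶠ p in 𝓝 (0 : (Fin n → ℂ) × (Fin n → ℂ) × ℂ),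
    Q p.1 p.2.1 (QBar Q p.2.1 p.1 p.2.2) = p.2.2

/-- `(f,g,f̃,g̃)` is a holomorphic Segre preserving map sending `(ℳ,0)` into `(ℳ',0)`. -/
def IsHSPM (Q Q' : (Fin n → ℂ) → (Fin n → ℂ) → ℂ → ℂ)
    (f : (Fin n → ℂ) → ℂ → Fin n → ℂ) (g : (Fin n → ℂ) → ℂ → ℂ)
    (ft : (Fin n → ℂ) → ℂ → Fin n → ℂ) (gt : (Fin n → ℂ) → ℂ → ℂ) : Prop :=
  (∀ᶠ p in 𝓝 (0 : (Fin n → ℂ) × ℂ), AnalyticAt ℂ (fun q : (Fin n → ℂ) × ℂ => f q.1 q.2) p) ∧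
  (∀ᶠ p in 𝓝 (0 : (Fin n → ℂ) × ℂ), AnalyticAt ℂ (fun q : (Fin n → ℂ) × ℂ => g q.1 q.2) p) ∧
  (∀ᶠ p in 𝓝 (0 : (Fin n → ℂ) × ℂ), AnalyticAt ℂ (fun q : (Fin n → ℂ) × ℂ => ft q.1 q.2) p) ∧
  (∀ᶠ p in 𝓝 (0 : (Fin n → ℂ) × ℂ), AnalyticAt ℂ (fun q : (Fin n → ℂ) × ℂ => gt q.1 q.2) p) ∧
  f 0 0 = 0 ∧ g 0 0 = 0 ∧ ft 0 0 = 0 ∧ gt 0 0 = 0 ∧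
  ∀ᶠ p in 𝓝 (0 : (Fin n → ℂ) × (Fin n → ℂ) × ℂ),
    g p.1 (Q p.1 p.2.1 p.2.2) =
      Q' (f p.1 (Q p.1 p.2.1 p.2.2)) (ft p.2.1 p.2.2) (gt p.2.1 p.2.2)

/-- `M` is of finite type at `0`: `(z,χ) ↦ Q(z,χ,0)` does not vanish identically near `0`. -/
def FiniteType (Q : (Fin n → ℂ) → (Fin n → ℂ) → ℂ → ℂ) : Prop :=
  ¬ ∀ᶠ p in 𝓝 (0 : (Fin n → ℂ) × (Fin n → ℂ)), Q p.1 p.2 0 = 0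

/-- Jacobian matrix of `z ↦ f(z,0)` at `z`. -/
noncomputable def jacz (f : (Fin n → ℂ) → ℂ → Fin n → ℂ) (z : Fin n → ℂ) :
    Matrix (Fin n) (Fin n) ℂ :=
  Matrix.of fun i j => pd j (fun z' => f z' 0 i) z

/-- `ℋ` is Segre transversal to `ℳ'` at `0`: `∂g/∂w(0,0) ≠ 0`. -/
noncomputable def SegreTransversal (g : (Fin n → ℂ) → ℂ → ℂ) : Prop :=
  deriv (fun w => g 0 w) 0 ≠ 0

/-- `ℋ` is totally Segre nondegenerate at `0`. -/
def TotallySegreNondeg (f ft : (Fin n → ℂ) → ℂ → Fin n → ℂ) : Prop :=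
  (¬ ∀ᶠ z in 𝓝 (0 : Fin n → ℂ), (jacz f z).det = 0) ∧
  (¬ ∀ᶠ χ in 𝓝 (0 : Fin n → ℂ), (jacz ft χ).det = 0)

/-- `ℋ` is transversally null: `g ≡ 0` and `g̃ ≡ 0` near `0`. -/
def TransversallyNull (g gt : (Fin n → ℂ) → ℂ → ℂ) : Prop :=
  (∀ᶠ p in 𝓝 (0 : (Fin n → ℂ) × ℂ), g p.1 p.2 = 0) ∧
  (∀ᶠ p in 𝓝 (0 : (Fin n → ℂ) × ℂ), gt p.1 p.2 = 0)

/-- The `k`-th coordinate direction in `ℂⁿ × ℂ`. -/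
noncomputable def dirCT (n : ℕ) (k : Fin (n + 1)) : (Fin n → ℂ) × ℂ :=
  if h : (k : ℕ) < n then (Pi.single ⟨k, h⟩ 1, 0) else (0, 1)

/-- `M` is holomorphically nondegenerate at `0`: for some `K`, the map
`(χ,τ) ↦ (∂_z^α Q(0,χ,τ))_{|α| ≤ K}` has generic rank `n+1`. -/
def HolNondeg (Q : (Fin n → ℂ) → (Fin n → ℂ) → ℂ → ℂ) : Prop :=
  ∃ K : ℕ, ∃ A : Fin (n + 1) → Fin n → ℕ, (∀ j, (∑ i, A j i) ≤ K) ∧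
    ¬ ∀ᶠ p in 𝓝 (0 : (Fin n → ℂ) × ℂ),
      (Matrix.of fun j k : Fin (n + 1) =>
        fderiv ℂ (fun q : (Fin n → ℂ) × ℂ => mpd (A j) (fun z => Q z q.1 q.2) 0) p
          (dirCT n k)).det = 0

/-- `M` is of class `𝒞` at `0`: for some `K`, the map
`χ ↦ (∂_z^α Q(0,χ,0))_{|α| ≤ K}` has generic rank `n`. -/
def ClassC (Q : (Fin n → ℂ) → (Fin n → ℂ) → ℂ → ℂ) : Prop :=
  ∃ K : ℕ, ∃ A : Fin n → Fin n → ℕ, (∀ j, (∑ i, A j i) ≤ K) ∧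
    ¬ ∀ᶠ χ in 𝓝 (0 : Fin n → ℂ),
      (Matrix.of fun j k : Fin n =>
        pd k (fun χ' => mpd (A j) (fun z => Q z χ' 0) 0) χ).det = 0

/-- `M` is finitely nondegenerate at `0`: for some `K`, the vectors
`∂_χ ∂_z^α Q(0,0,0)`, `|α| ≤ K`, span `ℂⁿ`. -/
def FinNondeg (Q : (Fin n → ℂ) → (Fin n → ℂ) → ℂ → ℂ) : Prop :=
  ∃ K : ℕ, Submodule.span ℂ
    {v : Fin n → ℂ | ∃ α : Fin n → ℕ, (∑ i, α i) ≤ K ∧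
      v = fun i => pd i (fun χ => mpd α (fun z => Q z χ 0) 0) 0} = ⊤

/-- Full Jacobian matrix of `(z,w) ↦ (f(z,w), g(z,w))` at `p ∈ ℂⁿ × ℂ`. -/
noncomputable def jacFull (f : (Fin n → ℂ) → ℂ → Fin n → ℂ) (g : (Fin n → ℂ) → ℂ → ℂ)
    (p : (Fin n → ℂ) × ℂ) : Matrix (Fin (n + 1)) (Fin (n + 1)) ℂ :=
  Matrix.of fun i k =>
    fderiv ℂ (fun q : (Fin n → ℂ) × ℂ => (Fin.snoc (f q.1 q.2) (g q.1 q.2) : Fin (n + 1) → ℂ) i) p (dirCT n k)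

/-- The degree-`d` homogeneous term of the Taylor series of `φ` at `0`. -/
noncomputable def homogTerm (d : ℕ) (φ : (Fin n → ℂ) → ℂ) : (Fin n → ℂ) → ℂ :=
  fun z => iteratedFDeriv ℂ d φ 0 (fun _ => z) / (d.factorial : ℂ)

/-- The order of vanishing of `φ` at `0`. -/
noncomputable def vanishOrder (φ : (Fin n → ℂ) → ℂ) : ℕ :=
  sInf {d | homogTerm d φ ≠ 0}


/-! Write `F(z, χ) = Q(z, χ, 0)`. Reality at `w = 0` says that `Q(z, χ, τ)` vanishes at
`τ = conj F(conj χ, conj z)`; as `Q` is Lipschitz near the origin, this gives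
`|F(z, χ)| ≤ C |F(conj χ, conj z)|`. For a function of one variable the order of vanishing is
determined by its size; applied first in `z` and then in `χ`, this shows that the
lexicographically lowest exponent of `F` depends only on `|F|`, up to constants and norm-preserving
changes of the variables. It is therefore the same whether `z` or `χ` is taken as the first
variable. -/

section IteratedDeriv

variable {𝕜 : Type*} [NontriviallyNormedField 𝕜] [CharZero 𝕜]
  {E E' : Type*} [NormedAddCommGroup E] [NormedSpace 𝕜 E] [CompleteSpace E]
  [NormedAddCommGroup E'] [NormedSpace 𝕜 E'] [CompleteSpace E']

lemma tendsto_norm_div_norm_pow {f : 𝕜 → E} (hf : AnalyticAt 𝕜 f 0) {n : ℕ}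
    (hlow : ∀ i < n, iteratedDeriv i f 0 = 0) :
    Tendsto (fun z => ‖f z‖ / ‖z‖ ^ n) (𝓝[≠] 0)
      (𝓝 (‖iteratedDeriv n f 0‖ / ‖(n.factorial : 𝕜)‖)) := by
  obtain ⟨R, hR, htaylor⟩ := hf.exists_eventuallyEq_sum_add_pow_mul (n + 1)
  set a : E := (n.factorial : 𝕜)⁻¹ • iteratedDeriv n f 0 with ha
  have hfactor : ∀ᶠ z in 𝓝 0, f z = z ^ n • (a + z • R z) := by
    filter_upwards [htaylor] with z hz
    rw [hz, Finset.sum_range_succ, Finset.sum_eq_zero fun i hi => by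
      rw [hlow i (Finset.mem_range.1 hi), smul_zero]]
    rw [ha, zero_add, smul_add, smul_smul, smul_smul, div_eq_mul_inv, pow_succ]
  have hlim : Tendsto (fun z => ‖a + z • R z‖) (𝓝[≠] 0) (𝓝 ‖a‖) := by
    have hcont : ContinuousAt (fun z => ‖a + z • R z‖) 0 :=
      (continuousAt_const.add (continuousAt_id.smul hR.continuousAt)).norm
    simpa using hcont.tendsto.mono_left nhdsWithin_le_nhds
  rw [show ‖iteratedDeriv n f 0‖ / ‖(n.factorial : 𝕜)‖ = ‖a‖ by
    rw [ha, norm_smul, norm_inv, div_eq_inv_mul]]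
  refine hlim.congr' ?_
  filter_upwards [hfactor.filter_mono nhdsWithin_le_nhds, self_mem_nhdsWithin] with z hz hz0
  have : ‖z‖ ≠ 0 := norm_ne_zero_iff.2 hz0
  rw [hz, norm_smul, norm_pow, mul_div_cancel_left₀ _ (pow_ne_zero n this)]

lemma norm_iteratedDeriv_le_of_norm_le {σ : 𝕜 → 𝕜} (hσ : ∀ z, ‖σ z‖ = ‖z‖) {f : 𝕜 → E}
    {g : 𝕜 → E'} (hf : AnalyticAt 𝕜 f 0) (hg : AnalyticAt 𝕜 g 0) {C : ℝ}
    (hfg : ∀ᶠ z in 𝓝 0, ‖f z‖ ≤ C * ‖g (σ z)‖) {n : ℕ}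
    (hlow : ∀ i < n, iteratedDeriv i g 0 = 0) :
    ‖iteratedDeriv n f 0‖ ≤ C * ‖iteratedDeriv n g 0‖ := by
  induction n using Nat.strong_induction_on with
  | _ n ih =>
    have hflow : ∀ i < n, iteratedDeriv i f 0 = 0 := fun i hi => norm_le_zero_iff.1 <| by
      simpa [hlow i hi] using ih i hi fun l hl => hlow l (hl.trans hi)
    have hσlim : Tendsto σ (𝓝[≠] 0) (𝓝[≠] 0) := by
      refine tendsto_nhdsWithin_iff.2 ⟨tendsto_zero_iff_norm_tendsto_zero.2 ?_, ?_⟩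
      · simpa only [hσ] using tendsto_norm_zero.mono_left nhdsWithin_le_nhds
      · filter_upwards [self_mem_nhdsWithin] with z hz
        exact norm_ne_zero_iff.1 (by rwa [hσ, norm_ne_zero_iff])
    have hgσ := ((tendsto_norm_div_norm_pow hg hlow).comp hσlim).const_mul C
    have hle : ‖iteratedDeriv n f 0‖ / ‖(n.factorial : 𝕜)‖ ≤
        C * (‖iteratedDeriv n g 0‖ / ‖(n.factorial : 𝕜)‖) := by
      refine le_of_tendsto_of_tendsto (tendsto_norm_div_norm_pow hf hflow) hgσ ?_
      filter_upwards [hfg.filter_mono nhdsWithin_le_nhds] with z hz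
      simp only [Function.comp_apply, hσ, ← mul_div_assoc]
      gcongr
    rw [← mul_div_assoc] at hle
    exact (div_le_div_iff_of_pos_right
      (norm_pos_iff.2 (Nat.cast_ne_zero.2 n.factorial_ne_zero))).1 hle

lemma eventually_eq_zero_of_iteratedDeriv_eq_zero {f : 𝕜 → E} {z : 𝕜} (hf : AnalyticAt 𝕜 f z)
    (hzero : ∀ n, iteratedDeriv n f z = 0) : ∀ᶠ x in 𝓝 z, f x = 0 := by
  rw [← analyticOrderAt_eq_top, ENat.eq_top_iff_forall_ge]
  exact fun n => (natCast_le_analyticOrderAt_iff_iteratedDeriv_eq_zero hf).2 fun i _ => hzero i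

end IteratedDeriv

section DirDeriv

variable (𝕜 : Type*) [NontriviallyNormedField 𝕜]
  {X : Type*} [NormedAddCommGroup X] [NormedSpace 𝕜 X]
  {E : Type*} [NormedAddCommGroup E] [NormedSpace 𝕜 E]

/-- The derivative along a constant vector `v`, as an operator on functions: `lineDeriv` with its
arguments reordered so that it can be iterated. -/
noncomputable def dirDeriv (v : X) (F : X → E) : X → E := fun x => lineDeriv 𝕜 F x v

variable {𝕜}

lemma iteratedDeriv_comp_add_smul (F : X → E) (x v : X) (n : ℕ) :
    iteratedDeriv n (fun t : 𝕜 => F (x + t • v)) = fun t => (dirDeriv 𝕜 v)^[n] F (x + t • v) := by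
  induction n generalizing F with
  | zero => simp
  | succ n ih =>
    have hderiv : deriv (fun t : 𝕜 => F (x + t • v)) = fun t => dirDeriv 𝕜 v F (x + t • v) := by
      funext t
      have h := deriv_comp_const_add (fun s : 𝕜 => F (x + s • v)) t 0
      simpa only [dirDeriv, lineDeriv, add_zero, add_smul, ← add_assoc] using h.symm
    rw [iteratedDeriv_succ', hderiv, ih, Function.iterate_succ_apply]

lemma dirDeriv_congr (v : X) {F G : X → E} {x : X} (h : F =ᶠ[𝓝 x] G) :
    dirDeriv 𝕜 v F =ᶠ[𝓝 x] dirDeriv 𝕜 v G :=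
  h.eventuallyEq_nhds.mono fun _ hy => hy.lineDeriv_eq

variable [CompleteSpace E] {F : X → E} {x : X}

lemma dirDeriv_eventuallyEq_fderiv (hF : AnalyticAt 𝕜 F x) (v : X) :
    dirDeriv 𝕜 v F =ᶠ[𝓝 x] fun y => fderiv 𝕜 F y v :=
  hF.eventually_analyticAt.mono fun _ hy => hy.differentiableAt.lineDeriv_eq_fderiv

lemma analyticAt_fderiv_apply (hF : AnalyticAt 𝕜 F x) (v : X) :
    AnalyticAt 𝕜 (fun y => fderiv 𝕜 F y v) x :=
  ((ContinuousLinearMap.apply 𝕜 E v).analyticAt _).comp hF.fderiv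

lemma analyticAt_dirDeriv (hF : AnalyticAt 𝕜 F x) (v : X) : AnalyticAt 𝕜 (dirDeriv 𝕜 v F) x :=
  (analyticAt_fderiv_apply hF v).congr (dirDeriv_eventuallyEq_fderiv hF v).symm

lemma analyticAt_dirDeriv_iterate (hF : AnalyticAt 𝕜 F x) (v : X) (n : ℕ) :
    AnalyticAt 𝕜 ((dirDeriv 𝕜 v)^[n] F) x := by
  induction n with
  | zero => exact hF
  | succ n ih =>
    rw [Function.iterate_succ_apply']
    exact analyticAt_dirDeriv ih v

lemma dirDeriv_comm (hF : AnalyticAt 𝕜 F x) (v w : X) :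
    dirDeriv 𝕜 v (dirDeriv 𝕜 w F) =ᶠ[𝓝 x] dirDeriv 𝕜 w (dirDeriv 𝕜 v F) := by
  filter_upwards [hF.eventually_analyticAt] with y hy
  have hsecond (a b : X) : dirDeriv 𝕜 a (dirDeriv 𝕜 b F) y = fderiv 𝕜 (fderiv 𝕜 F) y a b := by
    rw [(dirDeriv_congr a (dirDeriv_eventuallyEq_fderiv hy b)).eq_of_nhds,
      (dirDeriv_eventuallyEq_fderiv (analyticAt_fderiv_apply hy b) a).eq_of_nhds,
      fderiv_clm_apply hy.fderiv.differentiableAt (differentiableAt_const b)]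
    simp
  rw [hsecond, hsecond, hy.contDiffAt.isSymmSndFDerivAt_of_omega]

lemma dirDeriv_iterate_comm (hF : AnalyticAt 𝕜 F x) (v w : X) (j k : ℕ) :
    (dirDeriv 𝕜 v)^[j] ((dirDeriv 𝕜 w)^[k] F) =ᶠ[𝓝 x]
      (dirDeriv 𝕜 w)^[k] ((dirDeriv 𝕜 v)^[j] F) := by
  have hone (a b : X) {G : X → E} (hG : AnalyticAt 𝕜 G x) (n : ℕ) :
      (dirDeriv 𝕜 a)^[n] (dirDeriv 𝕜 b G) =ᶠ[𝓝 x] dirDeriv 𝕜 b ((dirDeriv 𝕜 a)^[n] G) := by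
    induction n with
    | zero => rfl
    | succ n ih =>
      simp only [Function.iterate_succ_apply']
      exact (dirDeriv_congr a ih).trans (dirDeriv_comm (analyticAt_dirDeriv_iterate hG a n) a b)
  induction k with
  | zero => rfl
  | succ k ih =>
    simp only [Function.iterate_succ_apply']
    exact (hone v w (analyticAt_dirDeriv_iterate hF w k) j).trans (dirDeriv_congr w ih)

end DirDeriv

section MixedDeriv

variable {𝕜 : Type*} [NontriviallyNormedField 𝕜]
  {E E' : Type*} [NormedAddCommGroup E] [NormedSpace 𝕜 E] [NormedAddCommGroup E'] [NormedSpace 𝕜 E']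

/-- The mixed partial derivative `∂_w^k ∂_z^j F` at the origin of the `(z, w)`-plane. -/
noncomputable def mixedDeriv (j k : ℕ) (F : 𝕜 × 𝕜 → E) : E :=
  iteratedDeriv k (fun w => iteratedDeriv j (fun z => F (z, w)) 0) 0

lemma iteratedDeriv_fst_eq_dirDeriv (F : 𝕜 × 𝕜 → E) (n : ℕ) (z w : 𝕜) :
    iteratedDeriv n (fun z => F (z, w)) z = (dirDeriv 𝕜 (1, 0))^[n] F (z, w) := by
  simpa using congrFun (iteratedDeriv_comp_add_smul F (0, w) (1, 0) n) z

lemma iteratedDeriv_snd_eq_dirDeriv (F : 𝕜 × 𝕜 → E) (n : ℕ) (z w : 𝕜) :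
    iteratedDeriv n (fun w => F (z, w)) w = (dirDeriv 𝕜 (0, 1))^[n] F (z, w) := by
  simpa using congrFun (iteratedDeriv_comp_add_smul F (z, 0) (0, 1) n) w

lemma eventually_snd_eventually_fst {α β : Type*} [TopologicalSpace α] [TopologicalSpace β]
    {a : α} {b : β} {P : α × β → Prop} (h : ∀ᶠ p in 𝓝 (a, b), P p) :
    ∀ᶠ y in 𝓝 b, ∀ᶠ x in 𝓝 a, P (x, y) :=
  ((continuous_swap.tendsto (b, a)).eventually h).curry_nhds

variable [CompleteSpace E] [CompleteSpace E'] {F : 𝕜 × 𝕜 → E} {G : 𝕜 × 𝕜 → E'}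

lemma analyticAt_iteratedDeriv_fst {z w : 𝕜} (hF : AnalyticAt 𝕜 F (z, w)) (n : ℕ) :
    AnalyticAt 𝕜 (fun w => iteratedDeriv n (fun z => F (z, w)) z) w := by
  simpa only [iteratedDeriv_fst_eq_dirDeriv] using
    (analyticAt_dirDeriv_iterate hF (1, 0) n).along_snd

lemma mixedDeriv_comp_swap (hF : AnalyticAt 𝕜 F 0) (j k : ℕ) :
    mixedDeriv j k (F ∘ Prod.swap) = mixedDeriv k j F := by
  simp only [mixedDeriv, Function.comp_apply, Prod.swap_prod_mk, iteratedDeriv_snd_eq_dirDeriv,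
    iteratedDeriv_fst_eq_dirDeriv]
  exact (dirDeriv_iterate_comm hF (1, 0) (0, 1) k j).eq_of_nhds

variable [CharZero 𝕜]

lemma norm_mixedDeriv_le_of_norm_le {σ : 𝕜 → 𝕜} (hσ : ∀ z, ‖σ z‖ = ‖z‖)
    (hF : AnalyticAt 𝕜 F 0) (hG : AnalyticAt 𝕜 G 0) {C : ℝ}
    (hFG : ∀ᶠ p in 𝓝 0, ‖F p‖ ≤ C * ‖G (p.map σ σ)‖) {j k : ℕ}
    (hfst : ∀ i < j, ∀ l, mixedDeriv i l G = 0) (hsnd : ∀ l < k, mixedDeriv j l G = 0) :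
    ‖mixedDeriv j k F‖ ≤ C * ‖mixedDeriv j k G‖ := by
  have hσ0 : Tendsto σ (𝓝 0) (𝓝 0) :=
    tendsto_zero_iff_norm_tendsto_zero.2 <| by simpa only [hσ] using tendsto_norm_zero
  have hGvanish : ∀ᶠ w in 𝓝 0, ∀ i < j, iteratedDeriv i (fun z => G (z, w)) 0 = 0 :=
    (Set.finite_Iio j).eventually_all.2 fun i hi =>
      eventually_eq_zero_of_iteratedDeriv_eq_zero (analyticAt_iteratedDeriv_fst hG i) (hfst i hi)
  have hslice : ∀ᶠ w in 𝓝 0, ‖iteratedDeriv j (fun z => F (z, w)) 0‖ ≤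
      C * ‖iteratedDeriv j (fun z => G (z, σ w)) 0‖ := by
    filter_upwards [eventually_snd_eventually_fst hF.eventually_analyticAt,
      hσ0.eventually (eventually_snd_eventually_fst hG.eventually_analyticAt),
      eventually_snd_eventually_fst hFG, hσ0.eventually hGvanish] with w hFw hGw hFGw hlow
    exact norm_iteratedDeriv_le_of_norm_le hσ hFw.self_of_nhds.along_fst
      hGw.self_of_nhds.along_fst hFGw hlow
  exact norm_iteratedDeriv_le_of_norm_le (g := fun w => iteratedDeriv j (fun z => G (z, w)) 0) hσ
    (analyticAt_iteratedDeriv_fst hF j) (analyticAt_iteratedDeriv_fst hG j) hslice hsnd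

end MixedDeriv

lemma eventually_eq_zero_of_mixedDeriv_eq_zero {𝕜 E : Type*} [RCLike 𝕜] [NormedAddCommGroup E]
    [NormedSpace 𝕜 E] [CompleteSpace E] {F : 𝕜 × 𝕜 → E} (hF : AnalyticAt 𝕜 F 0)
    (hzero : ∀ j k, mixedDeriv j k F = 0) : ∀ᶠ p in 𝓝 0, F p = 0 := by
  obtain ⟨r, hr, han⟩ := hF.exists_ball_analyticOnNhd
  have hball : Metric.ball (0 : 𝕜 × 𝕜) r = Metric.ball 0 r ×ˢ Metric.ball 0 r :=
    (ball_prod_same 0 0 r).symm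
  rw [hball] at han
  have h0 : (0 : 𝕜) ∈ Metric.ball 0 r := Metric.mem_ball_self hr
  have hconn : IsPreconnected (Metric.ball (0 : 𝕜) r) := Metric.isPreconnected_ball
  have hderiv (j : ℕ) : Set.EqOn (fun w => iteratedDeriv j (fun z => F (z, w)) 0) 0
      (Metric.ball 0 r) :=
    AnalyticOnNhd.eqOn_zero_of_preconnected_of_eventuallyEq_zero
      (fun w hw => analyticAt_iteratedDeriv_fst (han (0, w) ⟨h0, hw⟩) j) hconn h0
      (eventually_eq_zero_of_iteratedDeriv_eq_zero (analyticAt_iteratedDeriv_fst hF j) (hzero j))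
  have hslice {w : 𝕜} (hw : w ∈ Metric.ball 0 r) :
      Set.EqOn (fun z => F (z, w)) 0 (Metric.ball 0 r) :=
    AnalyticOnNhd.eqOn_zero_of_preconnected_of_eventuallyEq_zero
      (fun z hz => (han (z, w) ⟨hz, hw⟩).along_fst) hconn h0
      (eventually_eq_zero_of_iteratedDeriv_eq_zero (han (0, w) ⟨h0, hw⟩).along_fst
        fun j => hderiv j hw)
  filter_upwards [Metric.ball_mem_nhds 0 hr] with p hp
  rw [hball] at hp
  exact hslice hp.2 hp.1

-- A comparison of sizes controls a coefficient only when all lexicographically lower ones vanish,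
-- so the symmetry of `P` is assumed only at such indices.
lemma exists_isLeast_fst_isLeast_snd {P : ℕ → ℕ → Prop} (hne : ∃ j k, P j k)
    (hP : ∀ j k, (∀ i < j, ∀ l, ¬P i l) → (∀ l < k, ¬P j l) → P k j → P j k)
    (hP' : ∀ j k, (∀ i < j, ∀ l, ¬P l i) → (∀ l < k, ¬P l j) → P j k → P k j) :
    ∃ N S, IsLeast {k | ∃ j, P j k} N ∧ IsLeast {j | P j N} S ∧
      IsLeast {j | ∃ k, P j k} N ∧ IsLeast {k | P N k} S := by
  classical
  have hNleast : IsLeast {j | ∃ k, P j k} (Nat.find hne) := Nat.isLeast_find hne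
  set N := Nat.find hne
  have hSleast : IsLeast {k | P N k} (Nat.find hNleast.1) := Nat.isLeast_find hNleast.1
  set S := Nat.find hNleast.1
  have hfst : ∀ i < N, ∀ l, ¬P i l := fun i hi l h => (hNleast.2 ⟨l, h⟩).not_gt hi
  have hsnd : ∀ l < S, ¬P N l := fun l hl h => (hSleast.2 h).not_gt hl
  have hfst' : ∀ i < N, ∀ l, ¬P l i := by
    intro i hi l h
    exact hfst i hi l
      (hP i l (fun i' hi' => hfst i' (hi'.trans hi)) (fun l' _ => hfst i hi l') h)
  have hsnd' : ∀ l < S, ¬P l N := fun l hl h =>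
    hsnd l hl (hP N l hfst (fun l' hl' => hsnd l' (hl'.trans hl)) h)
  have hSN : P S N := hP' N S hfst' hsnd' hSleast.1
  exact ⟨N, S, ⟨⟨S, hSN⟩, fun k ⟨j, h⟩ => not_lt.1 fun hk => hfst' k hk j h⟩,
    ⟨hSN, fun j h => not_lt.1 fun hj => hsnd' j hj h⟩, hNleast, hSleast⟩

lemma sInf_fst_eq_and_sInf_snd_eq {P : ℕ → ℕ → Prop} {N S : ℕ} (hm : IsLeast {k | ∃ j, P j k} N)
    (hr : IsLeast {j | P j N} S) (hn : IsLeast {j | ∃ k, P j k} N) (hs : IsLeast {k | P N k} S) :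
    sInf {k | ∃ j, P j k} = sInf {j | ∃ k, P j k} ∧
      sInf {j | P j (sInf {k | ∃ j, P j k})} = sInf {k | P (sInf {j | ∃ k, P j k}) k} := by
  rw [hm.csInf_eq, hn.csInf_eq, hr.csInf_eq, hs.csInf_eq]
  exact ⟨rfl, rfl⟩

theorem exists_isLeast_mixedDeriv_ne_zero {𝕜 E : Type*} [RCLike 𝕜] [NormedAddCommGroup E]
    [NormedSpace 𝕜 E] [CompleteSpace E] {σ : 𝕜 → 𝕜} (hσ : ∀ z, ‖σ z‖ = ‖z‖) {F : 𝕜 × 𝕜 → E}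
    (hF : AnalyticAt 𝕜 F 0) (hsymm : F =O[𝓝 0] fun p => F (σ p.2, σ p.1))
    (hne : ¬∀ᶠ p in 𝓝 0, F p = 0) :
    ∃ N S, IsLeast {k | ∃ j, mixedDeriv j k F ≠ 0} N ∧ IsLeast {j | mixedDeriv j N F ≠ 0} S ∧
      IsLeast {j | ∃ k, mixedDeriv j k F ≠ 0} N ∧ IsLeast {k | mixedDeriv N k F ≠ 0} S := by
  obtain ⟨C, hC⟩ := hsymm.bound
  have hswap : Tendsto Prod.swap (𝓝 (0 : 𝕜 × 𝕜)) (𝓝 0) := continuous_swap.tendsto 0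
  have hFswap : AnalyticAt 𝕜 (F ∘ Prod.swap) 0 :=
    hF.comp_of_eq (analyticAt_snd.prod analyticAt_fst) rfl
  refine exists_isLeast_fst_isLeast_snd ?_ (fun j k hfst hsnd => ?_) (fun j k hfst hsnd => ?_)
  · by_contra! hzero
    exact hne (eventually_eq_zero_of_mixedDeriv_eq_zero hF hzero)
  · simp only [not_not] at hfst hsnd
    have hle := norm_mixedDeriv_le_of_norm_le hσ hFswap hF (hswap.eventually hC) hfst hsnd
    rw [mixedDeriv_comp_swap hF] at hle
    contrapose!
    intro h
    simpa [h] using hle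
  · simp only [not_not, ← mixedDeriv_comp_swap hF] at hfst hsnd
    have hle := norm_mixedDeriv_le_of_norm_le (G := F ∘ Prod.swap) hσ hF hFswap hC hfst hsnd
    rw [mixedDeriv_comp_swap hF] at hle
    contrapose!
    intro h
    simpa [h] using hle

lemma isBigO_of_eventually_graph_eq_zero {𝕜 X Y Z : Type*} [NontriviallyNormedField 𝕜]
    [NormedAddCommGroup X] [NormedSpace 𝕜 X] [NormedAddCommGroup Y] [NormedSpace 𝕜 Y]
    [NormedAddCommGroup Z] [NormedSpace 𝕜 Z] {Φ : X × Y → Z} {Φ' : X × Y →L[𝕜] Z} {x : X}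
    {G : X → Y} (hΦ : HasStrictFDerivAt Φ Φ' (x, 0)) (hG : Tendsto G (𝓝 x) (𝓝 0))
    (hzero : ∀ᶠ y in 𝓝 x, Φ (y, G y) = 0) : (fun y => Φ (y, 0)) =O[𝓝 x] G := by
  have hlim : Tendsto (fun y => ((y, (0 : Y)), (y, G y))) (𝓝 x) (𝓝 ((x, 0), (x, 0))) :=
    (tendsto_id.prodMk_nhds tendsto_const_nhds).prodMk_nhds (tendsto_id.prodMk_nhds hG)
  have hsub : (fun y => Φ (y, 0)) =O[𝓝 x] fun y => ((y, (0 : Y)) - (y, G y)) :=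
    (hΦ.isBigO_sub.comp_tendsto hlim).congr' (hzero.mono fun y hy => by simp [hy]) .rfl
  exact hsub.trans (Asymptotics.isBigO_of_le _ fun y => by simp [Prod.norm_def])

lemma pd_fin_one (f : (Fin 1 → ℂ) → ℂ) (t : ℂ) :
    pd 0 f (fun _ => t) = deriv (fun s : ℂ => f fun _ => s) t := by
  have h := (ContinuousLinearEquiv.funUnique (Fin 1) ℂ ℂ).symm.comp_right_fderiv (f := f) (x := t)
  have hone : (Pi.single 0 1 : Fin 1 → ℂ) = fun _ => 1 := by
    funext i
    rw [Subsingleton.elim i 0, Pi.single_eq_same]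
  rw [pd, hone]
  exact (DFunLike.congr_fun h 1).symm

lemma mpd_fin_one (f : (Fin 1 → ℂ) → ℂ) (k : ℕ) (t : ℂ) :
    mpd (fun _ => k) f (fun _ => t) = iteratedDeriv k (fun s : ℂ => f fun _ => s) t := by
  have hmpd (k : ℕ) : mpd (fun _ => k) f = (pd 0)^[k] f := by simp [mpd]
  rw [hmpd]
  induction k generalizing t with
  | zero => simp
  | succ k ih =>
    rw [Function.iterate_succ_apply', pd_fin_one, iteratedDeriv_succ]
    simp only [ih]

/-- The coefficient of `z ^ j * χ ^ k` in the Taylor expansion of `Q(z, χ, 0)` at the origin, for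
`n = 1`. -/
noncomputable def taylorCoeff (Q : (Fin 1 → ℂ) → (Fin 1 → ℂ) → ℂ → ℂ) (j k : ℕ) : ℂ :=
  mpd (fun _ => k) (fun χ => mpd (fun _ => j) (fun z => Q z χ 0) 0) 0 /
    ((j.factorial : ℂ) * (k.factorial : ℂ))

/-- The function `(z, χ) ↦ Q(z, χ, 0)` for `n = 1`, with `ℂ` in place of `Fin 1 → ℂ`. -/
def segreSlice (Q : (Fin 1 → ℂ) → (Fin 1 → ℂ) → ℂ → ℂ) : ℂ × ℂ → ℂ :=
  fun p => Q (fun _ => p.1) (fun _ => p.2) 0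

section SegreSlice

variable {Q : (Fin 1 → ℂ) → (Fin 1 → ℂ) → ℂ → ℂ}

lemma taylorCoeff_ne_zero_iff (j k : ℕ) :
    taylorCoeff Q j k ≠ 0 ↔ mixedDeriv j k (segreSlice Q) ≠ 0 := by
  have hfactorial : (j.factorial : ℂ) * (k.factorial : ℂ) ≠ 0 := by
    exact_mod_cast mul_ne_zero j.factorial_ne_zero k.factorial_ne_zero
  have hzero : (0 : Fin 1 → ℂ) = fun _ => 0 := rfl
  simp only [taylorCoeff, mixedDeriv, segreSlice, ne_eq, div_eq_zero_iff, hfactorial, or_false,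
    hzero, mpd_fin_one]

lemma not_eventually_segreSlice_eq_zero (hM : FiniteType Q) :
    ¬∀ᶠ p in 𝓝 0, segreSlice Q p = 0 := by
  refine fun hzero => hM ?_
  have hproj : Tendsto (fun p : (Fin 1 → ℂ) × (Fin 1 → ℂ) => (p.1 0, p.2 0)) (𝓝 0) (𝓝 0) :=
    Continuous.tendsto' (by fun_prop) _ _ rfl
  have hconst (v : Fin 1 → ℂ) : (fun _ => v 0) = v :=
    funext fun i => congrArg v (Subsingleton.elim 0 i)
  filter_upwards [hproj.eventually hzero] with p hp
  simpa only [segreSlice, hconst] using hp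

lemma analyticAt_comp_const
    (hQ : AnalyticAt ℂ (fun q : (Fin 1 → ℂ) × (Fin 1 → ℂ) × ℂ => Q q.1 q.2.1 q.2.2) 0) :
    AnalyticAt ℂ (fun q : (ℂ × ℂ) × ℂ => Q (fun _ => q.1.1) (fun _ => q.1.2) q.2) 0 :=
  hQ.comp_of_eq (f := fun q : (ℂ × ℂ) × ℂ => ((fun _ => q.1.1), (fun _ => q.1.2), q.2))
    ((AnalyticAt.pi fun _ => analyticAt_fst.comp analyticAt_fst).prod
      ((AnalyticAt.pi fun _ => analyticAt_snd.comp analyticAt_fst).prod analyticAt_snd)) rfl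

lemma analyticAt_segreSlice
    (hQ : AnalyticAt ℂ (fun q : (Fin 1 → ℂ) × (Fin 1 → ℂ) × ℂ => Q q.1 q.2.1 q.2.2) 0) :
    AnalyticAt ℂ (segreSlice Q) 0 :=
  (analyticAt_comp_const hQ).comp_of_eq (f := fun p : ℂ × ℂ => (p, 0)) (by fun_prop) rfl

lemma segreSlice_isBigO_conj_swap
    (hQ : AnalyticAt ℂ (fun q : (Fin 1 → ℂ) × (Fin 1 → ℂ) × ℂ => Q q.1 q.2.1 q.2.2) 0)
    (hQ0 : Q 0 0 0 = 0)
    (hreal : ∀ᶠ p in 𝓝 (0 : (Fin 1 → ℂ) × (Fin 1 → ℂ)), Q p.1 p.2 (QBar Q p.2 p.1 0) = 0) :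
    segreSlice Q =O[𝓝 0] fun p => segreSlice Q (starRingEnd ℂ p.2, starRingEnd ℂ p.1) := by
  have hQBar (p : ℂ × ℂ) : QBar Q (fun _ => p.2) (fun _ => p.1) 0 =
      starRingEnd ℂ (segreSlice Q (starRingEnd ℂ p.2, starRingEnd ℂ p.1)) := by
    rw [QBar, map_zero]
    rfl
  have hconst : Tendsto (fun p : ℂ × ℂ => ((fun _ => p.1, fun _ => p.2) :
      (Fin 1 → ℂ) × (Fin 1 → ℂ))) (𝓝 0) (𝓝 0) :=
    Continuous.tendsto' (by fun_prop) _ _ rfl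
  have hconj : Tendsto (fun p : ℂ × ℂ => (starRingEnd ℂ p.2, starRingEnd ℂ p.1)) (𝓝 0) (𝓝 0) :=
    Continuous.tendsto' (by fun_prop) _ _ (by simp)
  have hlim : Tendsto (fun p : ℂ × ℂ => QBar Q (fun _ => p.2) (fun _ => p.1) 0) (𝓝 0) (𝓝 0) := by
    have hslice : Tendsto (segreSlice Q) (𝓝 0) (𝓝 0) := by
      simpa only [show segreSlice Q 0 = 0 from hQ0] using
        (analyticAt_segreSlice hQ).continuousAt.tendsto
    simpa only [hQBar, Function.comp_def, map_zero] using
      (Complex.continuous_conj.tendsto 0).comp (hslice.comp hconj)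
  have h := isBigO_of_eventually_graph_eq_zero (analyticAt_comp_const hQ).hasStrictFDerivAt hlim
    (hconst.eventually hreal)
  exact h.trans (Asymptotics.isBigO_of_le _ fun p => by rw [hQBar, Complex.norm_conj])

end SegreSlice

theorem statement10_general (Q : (Fin 1 → ℂ) → (Fin 1 → ℂ) → ℂ → ℂ)
    (hQ : AnalyticAt ℂ (fun q : (Fin 1 → ℂ) × (Fin 1 → ℂ) × ℂ => Q q.1 q.2.1 q.2.2) 0)
    (hQ0 : Q 0 0 0 = 0)
    (hreal : ∀ᶠ p in 𝓝 (0 : (Fin 1 → ℂ) × (Fin 1 → ℂ)), Q p.1 p.2 (QBar Q p.2 p.1 0) = 0)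
    (hM : FiniteType Q) :
    ∃ N S, IsLeast {k | ∃ j, taylorCoeff Q j k ≠ 0} N ∧ IsLeast {j | taylorCoeff Q j N ≠ 0} S ∧
      IsLeast {j | ∃ k, taylorCoeff Q j k ≠ 0} N ∧ IsLeast {k | taylorCoeff Q N k ≠ 0} S := by
  simp only [taylorCoeff_ne_zero_iff]
  exact exists_isLeast_mixedDeriv_ne_zero Complex.norm_conj (analyticAt_segreSlice hQ)
    (segreSlice_isBigO_conj_swap hQ hQ0 hreal) (not_eventually_segreSlice_eq_zero hM)

/-- Observation 2.8: for `M ⊆ ℂ²` of finite type at `0` given in normal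
coordinates, the extremal exponents of the Taylor expansion of `Q(z,χ,0)` satisfy `m = n₀` and
`r = s`. -/
theorem statement10 (Q : (Fin 1 → ℂ) → (Fin 1 → ℂ) → ℂ → ℂ)
    (hQ : IsRealNormalDF Q)
    (hM : FiniteType Q) :
    let c : ℕ → ℕ → ℂ := fun j k =>
      mpd (fun _ => k) (fun χ => mpd (fun _ => j) (fun z => Q z χ 0) 0) 0 /
        ((j.factorial : ℂ) * (k.factorial : ℂ))
    let m := sInf {k | ∃ j, c j k ≠ 0}
    let r := sInf {j | c j m ≠ 0}
    let n₀ := sInf {j | ∃ k, c j k ≠ 0}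
    let s := sInf {k | c n₀ k ≠ 0}
    m = n₀ ∧ r = s := by
  have hincl : Tendsto (fun p : (Fin 1 → ℂ) × (Fin 1 → ℂ) => (p.1, p.2, (0 : ℂ))) (𝓝 0) (𝓝 0) :=
    Continuous.tendsto' (by fun_prop) _ _ rfl
  obtain ⟨N, S, hm, hr, hn₀, hs⟩ := statement10_general Q hQ.1.1.self_of_nhds
    hQ.1.2.self_of_nhds.1 (hincl.eventually hQ.2) hM
  exact sInf_fst_eq_and_sInf_snd_eq (P := fun j k => taylorCoeff Q j k ≠ 0) hm hr hn₀ hs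

end HSPMpaper
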